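/- arXiv:1401.0976 — 6 statements merged into one kernel-verified Lean document; each statement's English description precedes it below -/
import Mathlib

section
/- Fischer's identity: Let F be a field of characteristic zero or of characteristic greater than a (with a ≥ 1), so that 2^{a-1}·a! is invertible in F. Then in the polynomial ring F[y_1,…,y_a] one has y_1·y_2⋯y_a = (2^{a-1}·a!)^{-1} · Σ_{r_2,…,r_a ∈ {+1,-1}} (-1)^{#{i : r_i = -1}} · (y_1 + Σ_{i=2}^{a} r_i·y_i)^a, where the sum ranges over all 2^{a-1} choices of signs r_2,…,r_a. -/
/-!
Expand each power by the multinomial theorem. Summing over the signs, the coefficient of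
`∏ i, y i ^ k i` acquires the factor `∏ i ≠ j, (1 - (-1) ^ k i)`, which vanishes unless `k i` is odd
for every `i ≠ j`. As the exponents add up to the number of variables, parity then forces `k j` to
be odd as well, so every exponent is at least `1`, hence equal to `1`.
-/

open Finset

section

variable {ι : Type*} [Fintype ι]

lemma odd_of_sum_eq_card_of_forall_ne_odd {k : ι → ℕ} (hsum : ∑ i, k i = Fintype.card ι) {j : ι}
    (hodd : ∀ i ≠ j, Odd (k i)) : Odd (k j) := by
  classical
  have heven : Even (∑ i, (k i + 1)) := by
    simp [sum_add_distrib, hsum]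
  rw [← add_sum_erase _ _ (mem_univ j), Nat.even_add] at heven
  have hrest : Even (∑ i ∈ univ.erase j, (k i + 1)) :=
    even_sum _ fun i hi ↦ (hodd i (ne_of_mem_erase hi)).add_one
  simpa [Nat.even_add_one] using heven.2 hrest

lemma eq_one_of_sum_eq_card_of_forall_ne_odd {k : ι → ℕ} (hsum : ∑ i, k i = Fintype.card ι) {j : ι}
    (hodd : ∀ i ≠ j, Odd (k i)) : k = 1 := by
  have hpos (i : ι) : 1 ≤ k i := by
    obtain rfl | hij := eq_or_ne i j
    · exact (odd_of_sum_eq_card_of_forall_ne_odd hsum hodd).pos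
    · exact (hodd i hij).pos
  have hsum_one : ∑ _i : ι, 1 = ∑ i, k i := by simp [hsum]
  funext i
  exact ((sum_eq_sum_iff_of_le fun i _ ↦ hpos i).1 hsum_one i (mem_univ i)).symm

variable {R : Type*} [CommRing R] [DecidableEq ι]

lemma neg_one_pow_card_mul_prod_sign_pow (S : Finset ι) (k : ι → ℕ) :
    (-1 : R) ^ #S * ∏ i, (if i ∈ S then (-1 : R) else 1) ^ k i = ∏ i ∈ S, -(-1 : R) ^ k i := by
  simp only [prod_neg, ite_pow, one_pow, prod_ite_mem, univ_inter]

lemma sum_powerset_neg_one_pow_card_mul_prod_sign_pow (t : Finset ι) (k : ι → ℕ) :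
    ∑ S ∈ t.powerset, (-1 : R) ^ #S * ∏ i, (if i ∈ S then (-1 : R) else 1) ^ k i =
      ∏ i ∈ t, (1 - (-1 : R) ^ k i) := by
  simp only [neg_one_pow_card_mul_prod_sign_pow, sub_eq_add_neg, prod_one_add]

lemma sum_powerset_neg_one_pow_card_mul_signed_sum_pow (t : Finset ι) (y : ι → R) (m : ℕ) :
    ∑ S ∈ t.powerset, (-1) ^ #S * (∑ i, (if i ∈ S then -1 else 1) * y i) ^ m =
      ∑ k ∈ piAntidiag univ m,
        (∏ i ∈ t, (1 - (-1) ^ k i)) * (Nat.multinomial univ k * ∏ i, y i ^ k i) := by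
  simp only [sum_pow_eq_sum_piAntidiag, mul_sum, mul_pow, prod_mul_distrib,
    ← sum_powerset_neg_one_pow_card_mul_prod_sign_pow, sum_mul]
  rw [sum_comm]
  exact sum_congr rfl fun k _ ↦ sum_congr rfl fun S _ ↦ by ring

lemma prod_compl_singleton_one_sub_neg_one_pow {k : ι → ℕ} (hsum : ∑ i, k i = Fintype.card ι)
    (j : ι) :
    ∏ i ∈ {j}ᶜ, (1 - (-1 : R) ^ k i) = if k = 1 then 2 ^ (Fintype.card ι - 1) else 0 := by
  split_ifs with hk
  · simp [hk, card_compl, one_add_one_eq_two]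
  · obtain ⟨i, hij, hi⟩ : ∃ i ≠ j, ¬ Odd (k i) := by
      by_contra! hodd
      exact hk (eq_one_of_sum_eq_card_of_forall_ne_odd hsum hodd)
    refine prod_eq_zero (i := i) (by simpa using hij) ?_
    rw [(Nat.not_odd_iff_even.1 hi).neg_one_pow, sub_self]

theorem fischer_identity_general (j : ι) (y : ι → R) :
    2 ^ (Fintype.card ι - 1) * ((Fintype.card ι).factorial : R) * ∏ i, y i =
      ∑ S ∈ ({j}ᶜ : Finset ι).powerset,
        (-1) ^ #S * (∑ i, (if i ∈ S then -1 else 1) * y i) ^ Fintype.card ι := by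
  have hcoeff (k) (hk : k ∈ piAntidiag (univ : Finset ι) (Fintype.card ι)) :=
    prod_compl_singleton_one_sub_neg_one_pow (R := R) (mem_piAntidiag.1 hk).1 j
  have hone : (1 : ι → ℕ) ∈ piAntidiag univ (Fintype.card ι) := by simp
  have hmultinomial : Nat.multinomial univ (1 : ι → ℕ) = (Fintype.card ι).factorial := by
    simp [Nat.multinomial]
  rw [sum_powerset_neg_one_pow_card_mul_signed_sum_pow,
    sum_congr rfl fun k hk ↦ by rw [hcoeff k hk, ite_mul, zero_mul], sum_ite_eq', if_pos hone,
    hmultinomial]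
  simp only [Pi.one_apply, pow_one, mul_assoc]

end

/-- Fischer's identity: over a field `F` in which `2^(a-1) * a!` is invertible
(e.g. characteristic zero or characteristic greater than `a`), the monomial
`y₁ ⋯ y_a` equals `(2^(a-1) a!)⁻¹` times the signed sum, over all choices of
signs `r₂, …, r_a ∈ {±1}`, of `(-1)^{#{i : rᵢ = -1}} (y₁ + Σᵢ rᵢ yᵢ)^a`.
Sign choices are encoded by the subset `S ⊆ {i ≠ 1}` of indices with `rᵢ = -1`. -/
theorem fischer_identity (F : Type*) [Field F] (a : ℕ) (ha : 1 ≤ a)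
    (hchar : ((2 : F) ^ (a - 1) * (a.factorial : F)) ≠ 0) :
    (∏ i : Fin a, MvPolynomial.X (R := F) i) =
      ((2 : F) ^ (a - 1) * (a.factorial : F))⁻¹ •
        ∑ S ∈ (Finset.univ.filter (fun i : Fin a => i.val ≠ 0)).powerset,
          ((-1 : F) ^ S.card •
            (∑ i : Fin a, (if i ∈ S then (-1 : F) else 1) • MvPolynomial.X i) ^ a) := by
  have hcompl : univ.filter (fun i : Fin a ↦ i.val ≠ 0) = {⟨0, ha⟩}ᶜ := by
    ext; simp [Fin.ext_iff]
  rw [eq_inv_smul_iff₀ hchar, hcompl]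
  simpa [MvPolynomial.smul_eq_C_mul, apply_ite MvPolynomial.C, map_ofNat MvPolynomial.C 2] using
    fischer_identity_general (⟨0, ha⟩ : Fin a) (MvPolynomial.X (R := F))
end

section
/- Saxena's duality identity: Let F be a field of characteristic zero and let a, m ≥ 1 be integers. Then there exist univariate polynomials f_{i,j} ∈ F[y], for 1 ≤ i ≤ ma+1 and 1 ≤ j ≤ m, each of degree at most a, such that in F[y_1,…,y_m] one has (y_1 + y_2 + ⋯ + y_m)^a = Σ_{i=1}^{ma+1} Π_{j=1}^{m} f_{i,j}(y_j), where f_{i,j}(y_j) denotes the substitution of the variable y_j into the univariate polynomial f_{i,j}. -/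
/-!
The exponential turns sums into products: in `∏ j, exp (y j * t)` the coefficient of `t ^ a` is
`(∑ j, y j) ^ a / a!`. That coefficient is unchanged when every factor is truncated to degree `a`
in `t`, and the product is then a polynomial in `t` of degree at most `m * a`. A coefficient of
such a polynomial is a fixed linear combination of its values at `m * a + 1` nodes, and each value
is a product of univariate polynomials in the `y j`.
-/

section

open Polynomial Finset.HasAntidiagonal
open scoped Nat

section AevalCMulX

variable {R S : Type*} [CommSemiring R] [CommSemiring S] [Algebra R S]

lemma aeval_C_mul_X_eq_comp (y : S) (p : R[X]) :
    aeval (C y * X) p = (p.map (algebraMap R S)).comp (C y * X) := by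
  rw [comp, eval₂_map, aeval_def]
  rfl

lemma coeff_aeval_C_mul_X (y : S) (p : R[X]) (n : ℕ) :
    (aeval (C y * X) p).coeff n = p.coeff n • y ^ n := by
  rw [aeval_C_mul_X_eq_comp, comp_C_mul_X_coeff, coeff_map, Algebra.smul_def]

lemma natDegree_aeval_C_mul_X_le (y : S) (p : R[X]) :
    (aeval (C y * X) p).natDegree ≤ p.natDegree :=
  natDegree_le_iff_coeff_eq_zero.mpr fun n hn ↦ by
    rw [coeff_aeval_C_mul_X, coeff_eq_zero_of_natDegree_lt hn, zero_smul]

lemma eval_algebraMap_aeval_C_mul_X (y : S) (p : R[X]) (c : R) :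
    (aeval (C y * X) p).eval (algebraMap R S c) = aeval y (p.comp (C c * X)) := by
  rw [aeval_C_mul_X_eq_comp, eval_comp, eval_map_algebraMap, aeval_comp]
  simp only [map_mul, aeval_C, aeval_X, eval_mul, eval_C, eval_X]
  rw [mul_comm]

end AevalCMulX

section TruncExp

/-- The exponential series truncated to degree `a`. The coefficients `1 / k!` are written with
`Ring.inverse`, so they are meaningful only when `a!` is a unit of `R`. -/
noncomputable def truncExp (R : Type*) [CommSemiring R] (a : ℕ) : R[X] :=
  ∑ k ∈ Finset.range (a + 1), monomial k (Ring.inverse (k ! : R))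

variable {R S ι : Type*} [CommSemiring R] [CommSemiring S] [Algebra R S]

lemma natDegree_truncExp_le (a : ℕ) : (truncExp R a).natDegree ≤ a :=
  natDegree_sum_le_of_forall_le _ _ fun _ hk ↦
    (natDegree_monomial_le _).trans (Finset.mem_range_succ_iff.mp hk)

lemma coeff_truncExp {a n : ℕ} (hn : n ≤ a) : (truncExp R a).coeff n = Ring.inverse (n ! : R) := by
  simp [truncExp, coeff_monomial, Nat.lt_succ_of_le hn]

lemma inverse_factorial_smul_add_pow {n : ℕ} (hn : IsUnit (n ! : R)) (x y : S) :
    Ring.inverse (n ! : R) • (x + y) ^ n =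
      ∑ p ∈ antidiagonal n,
        (Ring.inverse (p.1 ! : R) • x ^ p.1) * (Ring.inverse (p.2 ! : R) • y ^ p.2) := by
  rw [(Commute.all x y).add_pow', Finset.smul_sum]
  refine Finset.sum_congr rfl fun p hp ↦ ?_
  rw [← Nat.cast_smul_eq_nsmul R, smul_smul, Nat.castChoose_eq hn hp, mul_assoc,
    Ring.inverse_mul_cancel_left _ _ hn, smul_mul_smul_comm]

lemma coeff_prod_aeval_truncExp {a n : ℕ} (ha : IsUnit (a ! : R)) (hn : n ≤ a)
    (s : Finset ι) (y : ι → S) :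
    (∏ j ∈ s, aeval (C (y j) * X) (truncExp R a)).coeff n =
      Ring.inverse (n ! : R) • (∑ j ∈ s, y j) ^ n := by
  classical
  induction s using Finset.induction_on generalizing n with
  | empty => rcases n with _ | n <;> simp [coeff_one]
  | insert i s hi ih =>
    rw [Finset.prod_insert hi, Finset.sum_insert hi, coeff_mul,
      inverse_factorial_smul_add_pow (ha.natCast_factorial_of_le hn)]
    refine Finset.sum_congr rfl fun p hp ↦ ?_
    rw [coeff_aeval_C_mul_X, coeff_truncExp ((antidiagonal.fst_le hp).trans hn),
      ih ((antidiagonal.snd_le hp).trans hn)]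

lemma natDegree_prod_aeval_truncExp_le (a : ℕ) (s : Finset ι) (y : ι → S) :
    (∏ j ∈ s, aeval (C (y j) * X) (truncExp R a)).natDegree ≤ s.card * a :=
  (natDegree_prod_le _ _).trans <| Finset.sum_le_card_nsmul _ _ _ fun _ _ ↦
    (natDegree_aeval_C_mul_X_le _ _).trans (natDegree_truncExp_le a)

end TruncExp

section Interpolation

variable {R S : Type*} [CommRing R] [CommSemiring S] [Algebra R S]

lemma isUnit_det_vandermonde {n : ℕ} {v : Fin n → R}
    (hv : Pairwise fun i j ↦ IsUnit (v i - v j)) : IsUnit (Matrix.vandermonde v).det := by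
  simp only [Matrix.det_vandermonde, IsUnit.prod_iff]
  exact fun i _ j hj ↦ hv (Finset.mem_Ioi.mp hj).ne'

lemma exists_sum_smul_eval_eq_coeff {n : ℕ} {v : Fin n → R}
    (hv : Pairwise fun i j ↦ IsUnit (v i - v j)) (k : Fin n) :
    ∃ w : Fin n → R, ∀ p : S[X], p.natDegree < n →
      ∑ i, w i • p.eval (algebraMap R S (v i)) = p.coeff k := by
  have inv_mul_apply (l : Fin n) :
      ∑ i, (Matrix.vandermonde v)⁻¹ k i * v i ^ (l : ℕ) = (1 : Matrix _ _ R) k l := by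
    rw [← Matrix.nonsing_inv_mul _ (isUnit_det_vandermonde hv), Matrix.mul_apply]
    rfl
  refine ⟨(Matrix.vandermonde v)⁻¹ k, fun p hp ↦ ?_⟩
  calc ∑ i, (Matrix.vandermonde v)⁻¹ k i • p.eval (algebraMap R S (v i))
      = ∑ l : Fin n, (∑ i, (Matrix.vandermonde v)⁻¹ k i * v i ^ (l : ℕ)) • p.coeff l := by
        simp only [eval_eq_sum_range' hp, Finset.sum_range, Finset.smul_sum, Finset.sum_smul]
        rw [Finset.sum_comm]
        simp only [Algebra.smul_def, map_mul, map_pow, mul_assoc, mul_comm (p.coeff _)]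
    _ = p.coeff k := by simp [inv_mul_apply, Matrix.one_apply]

end Interpolation

theorem saxena_duality_general {R ι : Type*} [CommRing R] [Fintype ι] [Nonempty ι] {a n : ℕ}
    (ha : IsUnit (a ! : R)) {v : Fin n → R} (hv : Pairwise fun i j ↦ IsUnit (v i - v j))
    (hn : Fintype.card ι * a < n) :
    ∃ f : Fin n → ι → R[X],
      (∀ i j, (f i j).natDegree ≤ a) ∧
      (∑ j, MvPolynomial.X (R := R) j) ^ a = ∑ i, ∏ j, aeval (MvPolynomial.X j) (f i j) := by
  classical
  obtain ⟨j₀⟩ := ‹Nonempty ι›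
  have ha_lt : a < n := (Nat.le_mul_of_pos_left a Fintype.card_pos).trans_lt hn
  obtain ⟨w, hw⟩ := exists_sum_smul_eval_eq_coeff (S := MvPolynomial ι R) hv ⟨a, ha_lt⟩
  let E (i : Fin n) : R[X] := (truncExp R a).comp (C (v i) * X)
  let P : (MvPolynomial ι R)[X] := ∏ j, aeval (C (MvPolynomial.X j) * X) (truncExp R a)
  have natDegree_E (i : Fin n) : (E i).natDegree ≤ a :=
    (natDegree_aeval_C_mul_X_le (v i) _).trans (natDegree_truncExp_le a)
  have eval_P (i : Fin n) :
      P.eval (algebraMap R _ (v i)) = ∏ j, aeval (MvPolynomial.X j) (E i) := by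
    simp only [P, E, eval_prod, eval_algebraMap_aeval_C_mul_X]
  -- The scalar `a! * w i` is absorbed into the single factor `j₀`.
  refine ⟨fun i j ↦ Pi.mulSingle (M := fun _ ↦ R) j₀ (a ! * w i) j • E i,
    fun i j ↦ (natDegree_smul_le _ _).trans (natDegree_E i), ?_⟩
  calc (∑ j, MvPolynomial.X j) ^ a
      = (a ! : R) • P.coeff a := by
        rw [coeff_prod_aeval_truncExp ha le_rfl, smul_smul, Ring.mul_inverse_cancel _ ha, one_smul]
    _ = (a ! : R) • ∑ i, w i • ∏ j, aeval (MvPolynomial.X j) (E i) := by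
        simp only [← eval_P]
        rw [hw P ((natDegree_prod_aeval_truncExp_le a _ _).trans_lt hn)]
    _ = _ := by
        simp only [map_smul, Finset.prod_smul, Finset.prod_pi_mulSingle', Finset.mem_univ, if_true,
          Finset.smul_sum, smul_smul]

end

/-- Saxena's duality identity: over a field of characteristic zero, for `a, m ≥ 1`,
there exist univariate polynomials `f i j` of degree at most `a` such that
`(y₁ + ⋯ + y_m)^a = Σ_{i=1}^{ma+1} Π_{j=1}^{m} f i j (y_j)`. -/
theorem saxena_duality (F : Type*) [Field F] [CharZero F] (a m : ℕ)
    (ha : 1 ≤ a) (hm : 1 ≤ m) :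
    ∃ f : Fin (m * a + 1) → Fin m → Polynomial F,
      (∀ i j, (f i j).natDegree ≤ a) ∧
      (∑ j : Fin m, MvPolynomial.X (R := F) j) ^ a =
        ∑ i : Fin (m * a + 1), ∏ j : Fin m,
          Polynomial.aeval (MvPolynomial.X j) (f i j) := by
  have : Nonempty (Fin m) := ⟨⟨0, hm⟩⟩
  have hv : Pairwise fun i j : Fin (m * a + 1) ↦ IsUnit (((i : ℕ) : F) - ((j : ℕ) : F)) :=
    fun i j hij ↦ (sub_ne_zero.mpr (Nat.cast_injective.ne (Fin.val_ne_of_ne hij))).isUnit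
  exact saxena_duality_general (.natCast_factorial_of_algebra F a) hv (by simp)
end

section
/- Vandermonde map preserves k-rank: Let F be a field with |F| > n·k². For β ∈ F let Ψ_β : F[x_1,…,x_n] → F[y_1,…,y_k] be the F-algebra homomorphism determined by Ψ_β(x_i) = Σ_{j=1}^{k} β^{i·j}·y_j for each i ∈ {1,…,n}. Let S be a finite set of linear forms (homogeneous polynomials of degree 1) in F[x_1,…,x_n] whose F-linear span has dimension at most k. Then there exists β ∈ F such that the dimension of the F-linear span of Ψ_β(S) = {Ψ_β(ℓ) : ℓ ∈ S} equals the dimension of the F-linear span of S. -/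
/-!
Identify a linear form `ℓ = ∑ aᵢ xᵢ` with the univariate polynomial `p = ∑ aᵢ Xⁱ`. The coefficient
of `yⱼ` in `Ψ_β(ℓ)` is then `p(βʲ)`. Let `W` be the space of univariate polynomials that corresponds
to the span of `S`, and let `r = min k (dim W)`. It suffices to find `p₁, …, pᵣ` in `W` such that
`det (pₐ(βʲ)) ≠ 0` for some `β`. Since `W` has elements of `dim W` distinct degrees, the `pₐ` can be
chosen with strictly increasing degrees `dₐ`. By the rearrangement inequality, the diagonal is then
the only term of highest degree in the Leibniz expansion of `det (pₐ(Xʲ))`. This determinant is thus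
a nonzero polynomial of degree `∑ dₐ a ≤ n (1 + ⋯ + k)`, which is too small for it to vanish on `F`.
-/

open Polynomial

theorem perm_eq_one_of_strictMono {ι : Type*} [LinearOrder ι] [Finite ι] {σ : Equiv.Perm ι}
    (hσ : StrictMono σ) : σ = 1 := by
  have orderIso_eq_refl : hσ.orderIsoOfSurjective σ σ.surjective = OrderIso.refl ι :=
    Subsingleton.elim _ _
  exact Equiv.ext fun i => DFunLike.congr_fun orderIso_eq_refl i

theorem sum_mul_comp_perm_lt_sum_mul_of_strictMono {ι α : Type*} [LinearOrder ι] [Fintype ι]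
    [Semiring α] [LinearOrder α] [IsStrictOrderedRing α] [ExistsAddOfLE α] {f g : ι → α}
    (hf : StrictMono f) (hg : StrictMono g) {σ : Equiv.Perm ι} (hσ : σ ≠ 1) :
    ∑ i, f i * g (σ i) < ∑ i, f i * g i := by
  rw [(hf.monotone.monovary hg.monotone).sum_mul_comp_perm_lt_sum_mul_iff]
  intro hfgσ
  have σ_monotone : Monotone σ := fun i j hij => by
    by_contra! hlt
    exact hlt.ne' (congrArg σ (hij.antisymm (hf.le_iff_le.1 (hfgσ (hg hlt)))))
  exact hσ (perm_eq_one_of_strictMono (σ_monotone.strictMono_of_injective σ.injective))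

section Determinant

variable {R ι : Type*} [CommRing R] [Fintype ι]

theorem degree_det_eq_degree_prod_diag [DecidableEq ι] {M : Matrix ι ι R[X]}
    (hdiag : ∏ i, M i i ≠ 0)
    (hlt : ∀ σ : Equiv.Perm ι, σ ≠ 1 → (∏ i, M i (σ i)).degree < (∏ i, M i i).degree) :
    M.det.degree = (∏ i, M i i).degree := by
  have leibniz : M.det = ∏ i, M i i +
      ∑ σ ∈ Finset.univ.erase (1 : Equiv.Perm ι), Equiv.Perm.sign σ • ∏ i, M i (σ i) := by
    rw [← Matrix.det_transpose, Matrix.det_apply, ← Finset.add_sum_erase _ _ (Finset.mem_univ 1)]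
    simp
  rw [leibniz]
  refine degree_add_eq_left_of_degree_lt ((degree_sum_le _ _).trans_lt ?_)
  refine (Finset.sup_lt_iff (bot_lt_iff_ne_bot.2 (degree_ne_bot.2 hdiag))).2 fun σ hσ => ?_
  rw [Units.smul_def]
  exact (degree_smul_le _ _).trans_lt (hlt σ (Finset.ne_of_mem_erase hσ))

variable [IsDomain R]

theorem degree_prod_expand {p : ι → R[X]} (hp : ∀ i, p i ≠ 0) {e : ι → ℕ} (he : ∀ i, 0 < e i) :
    (∏ i, expand R (e i) (p i)).degree = ((∑ i, (p i).natDegree * e i : ℕ) : WithBot ℕ) := by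
  rw [degree_prod, Nat.cast_sum]
  refine Finset.sum_congr rfl fun i _ => ?_
  rw [degree_eq_natDegree ((expand_ne_zero (he i)).2 (hp i)), natDegree_expand]

theorem degree_det_expand [LinearOrder ι] {p : ι → R[X]} (hp : ∀ i, p i ≠ 0)
    (hdeg : StrictMono fun i => (p i).natDegree) {e : ι → ℕ} (he : StrictMono e)
    (hpos : ∀ i, 0 < e i) :
    (Matrix.of fun i j => expand R (e j) (p i)).det.degree =
      ((∑ i, (p i).natDegree * e i : ℕ) : WithBot ℕ) := by
  rw [degree_det_eq_degree_prod_diag]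
  · exact degree_prod_expand hp hpos
  · exact Finset.prod_ne_zero_iff.2 fun i _ => (expand_ne_zero (hpos i)).2 (hp i)
  · intro σ hσ
    simp only [Matrix.of_apply]
    rw [degree_prod_expand hp hpos, degree_prod_expand hp fun i => hpos (σ i)]
    exact_mod_cast sum_mul_comp_perm_lt_sum_mul_of_strictMono hdeg he hσ

theorem exists_det_eval_pow_ne_zero [LinearOrder ι] {p : ι → R[X]} (hp : ∀ i, p i ≠ 0)
    (hdeg : StrictMono fun i => (p i).natDegree) {e : ι → ℕ} (he : StrictMono e)
    (hpos : ∀ i, 0 < e i)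
    (hR : ((∑ i, (p i).natDegree * e i : ℕ) : Cardinal) < Cardinal.mk R) :
    ∃ β : R, (Matrix.of fun i j => (p i).eval (β ^ e j)).det ≠ 0 := by
  have degree_eq := degree_det_expand hp hdeg he hpos
  have det_ne_zero : (Matrix.of fun i j => expand R (e j) (p i)).det ≠ 0 :=
    degree_ne_bot.1 (degree_eq ▸ WithBot.coe_ne_bot)
  obtain ⟨β, hβ⟩ := exists_eval_ne_zero_of_natDegree_lt_card _ det_ne_zero
    (by rwa [natDegree_eq_of_degree_eq_some degree_eq])
  refine ⟨β, ?_⟩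
  convert hβ using 1
  rw [← coe_evalRingHom, RingHom.map_det]
  congr 1
  ext i j
  simp [expand_eval]

end Determinant

section Degrees

variable {R : Type*} [Ring R] [StrongRankCondition R] {W : Submodule R R[X]}

theorem finrank_le_card_of_natDegree_mem {D : Finset ℕ}
    (hD : ∀ p ∈ W, p ≠ 0 → p.natDegree ∈ D) : Module.finrank R W ≤ D.card := by
  let coeffs : W →ₗ[R] (D → R) := LinearMap.pi fun d => lcoeff R d ∘ₗ W.subtype
  have coeffs_injective : Function.Injective coeffs := by
    refine (injective_iff_map_eq_zero coeffs).2 fun p hp => ?_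
    by_contra hne
    have hp0 : (p : R[X]) ≠ 0 := fun h => hne (Subtype.ext h)
    exact leadingCoeff_ne_zero.2 hp0 (congrFun hp ⟨_, hD p p.2 hp0⟩)
  simpa using LinearMap.finrank_le_finrank_of_injective coeffs_injective

theorem exists_strictMono_natDegree_of_le_finrank {r : ℕ} (hr : r ≤ Module.finrank R W) :
    ∃ p : Fin r → R[X], (∀ a, p a ∈ W ∧ p a ≠ 0) ∧ StrictMono fun a => (p a).natDegree := by
  let degrees : Set ℕ := {d | ∃ p ∈ W, p ≠ 0 ∧ p.natDegree = d}
  obtain ⟨D, hD, hcard⟩ : ∃ D : Finset ℕ, ↑D ⊆ degrees ∧ D.card = r := by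
    by_cases hfin : degrees.Finite
    · have hle : r ≤ hfin.toFinset.card := hr.trans <|
        finrank_le_card_of_natDegree_mem fun p hp hp0 => hfin.mem_toFinset.2 ⟨p, hp, hp0, rfl⟩
      obtain ⟨D, hD, hcard⟩ := Finset.exists_subset_card_eq hle
      exact ⟨D, fun d hd => hfin.mem_toFinset.1 (hD hd), hcard⟩
    · exact Set.Infinite.exists_subset_card_eq hfin r
  choose p hpW hp0 hpdeg using fun a => hD (D.orderEmbOfFin_mem hcard a)
  refine ⟨p, fun a => ⟨hpW a, hp0 a⟩, fun a b hab => ?_⟩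
  simpa only [hpdeg] using (D.orderEmbOfFin hcard).strictMono hab

end Degrees

theorem card_le_finrank_of_det_ne_zero {R M ι : Type*} [CommRing R] [IsDomain R]
    [AddCommGroup M] [Module R M] [Fintype ι] [DecidableEq ι] {V : Submodule R M}
    [Module.Finite R V] {v : ι → M} (hv : ∀ i, v i ∈ V) (f : ι → Module.Dual R M)
    (hdet : (Matrix.of fun i j => f j (v i)).det ≠ 0) :
    Fintype.card ι ≤ Module.finrank R V := by
  have rows_independent := Matrix.linearIndependent_rows_of_det_ne_zero hdet
  have v_independent : LinearIndependent R fun i => (⟨v i, hv i⟩ : V) :=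
    LinearIndependent.of_comp (LinearMap.pi f ∘ₗ V.subtype) rows_independent
  exact v_independent.fintype_card_le_finrank

theorem finrank_map_eq_of_disjoint_ker {R M N : Type*} [Ring R] [AddCommGroup M] [Module R M]
    [AddCommGroup N] [Module R N] {V : Submodule R M} {f : M →ₗ[R] N}
    (hf : Disjoint V (LinearMap.ker f)) : Module.finrank R (V.map f) = Module.finrank R V := by
  rw [← LinearMap.range_domRestrict]
  exact LinearMap.finrank_range_of_inj (LinearMap.injective_domRestrict_iff.2 hf)

section Substitutions

variable (R : Type*) [CommSemiring R] (n : ℕ)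

/-- The substitution `xᵢ ↦ Xⁱ`, which encodes linear forms as univariate polynomials. As the index
`i : Fin n` starts from `0`, it stands for the variable `xᵢ₊₁`. -/
noncomputable def powerSubst : MvPolynomial (Fin n) R →ₐ[R] R[X] :=
  MvPolynomial.aeval fun i => X ^ (i.1 + 1)

variable {R} in
/-- The Vandermonde map `Ψ_β`, that is, `xᵢ ↦ ∑ⱼ βⁱʲ yⱼ`. As the indices `i : Fin n` and `j : Fin k`
start from `0`, they stand for the variables `xᵢ₊₁` and `yⱼ₊₁`. -/
noncomputable def vandermondeSubst (k : ℕ) (β : R) :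
    MvPolynomial (Fin n) R →ₐ[R] MvPolynomial (Fin k) R :=
  MvPolynomial.aeval fun i => ∑ j : Fin k, β ^ ((i.1 + 1) * (j.1 + 1)) • MvPolynomial.X j

variable {R n}

/-- Evaluation at the `j`-th unit vector reads off the coefficient of `yⱼ` in a linear form. -/
theorem aeval_single_vandermondeSubst {k : ℕ} (β : R) (j : Fin k) (ℓ : MvPolynomial (Fin n) R) :
    MvPolynomial.aeval (Pi.single j 1) (vandermondeSubst n k β ℓ) =
      (powerSubst R n ℓ).eval (β ^ (j.1 + 1)) := by
  suffices (MvPolynomial.aeval (Pi.single j 1)).comp (vandermondeSubst n k β) =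
      (aeval (β ^ (j.1 + 1))).comp (powerSubst R n) by
    simpa [coe_aeval_eq_eval] using DFunLike.congr_fun this ℓ
  ext i
  simp [vandermondeSubst, powerSubst, Pi.single_apply, ← pow_mul, mul_comm]

theorem disjoint_homogeneousSubmodule_one_ker_powerSubst :
    Disjoint (MvPolynomial.homogeneousSubmodule (Fin n) R 1)
      (LinearMap.ker (powerSubst R n).toLinearMap) := by
  rw [MvPolynomial.homogeneousSubmodule_one_eq_span_X]
  have powers_independent : LinearIndependent R fun i : Fin n => (X : R[X]) ^ (i.1 + 1) := by
    simpa [Function.comp_def, X_pow_eq_monomial] using (basisMonomials R).linearIndependent.comp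
      (fun i : Fin n => i.1 + 1) fun i j hij => Fin.ext (Nat.succ_injective hij)
  refine Submodule.range_ker_disjoint ?_
  simpa [Function.comp_def, powerSubst] using powers_independent

theorem natDegree_powerSubst_le {ℓ : MvPolynomial (Fin n) R} (hℓ : ℓ.IsHomogeneous 1) :
    (powerSubst R n ℓ).natDegree ≤ n := by
  suffices MvPolynomial.homogeneousSubmodule (Fin n) R 1 ≤
      (degreeLE R n).comap (powerSubst R n).toLinearMap from
    natDegree_le_of_degree_le (mem_degreeLE.1 (this hℓ))
  rw [MvPolynomial.homogeneousSubmodule_one_eq_span_X, Submodule.span_le]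
  rintro _ ⟨i, rfl⟩
  simpa [powerSubst, mem_degreeLE] using (degree_X_pow_le _).trans (mod_cast i.2)

theorem map_vandermondeSubst_le_homogeneousSubmodule {k : ℕ} (β : R) :
    (MvPolynomial.homogeneousSubmodule (Fin n) R 1).map (vandermondeSubst n k β).toLinearMap ≤
      MvPolynomial.homogeneousSubmodule (Fin k) R 1 := by
  rw [MvPolynomial.homogeneousSubmodule_one_eq_span_X, Submodule.map_span_le]
  rintro _ ⟨i, rfl⟩
  simp only [vandermondeSubst, AlgHom.toLinearMap_apply, MvPolynomial.aeval_X]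
  exact sum_mem fun j _ => Submodule.smul_mem _ _ (MvPolynomial.isHomogeneous_X R j)

end Substitutions

theorem finrank_homogeneousSubmodule_one_le {R : Type*} [CommSemiring R] [StrongRankCondition R]
    (k : ℕ) :
    Module.finrank R (MvPolynomial.homogeneousSubmodule (Fin k) R 1) ≤ k := by
  rw [MvPolynomial.homogeneousSubmodule_one_eq_span_X]
  simpa [Set.finrank] using finrank_range_le_card (R := R) (MvPolynomial.X : Fin k → _)

theorem sum_fin_val_add_one (k : ℕ) : ∑ j : Fin k, (j.1 + 1) = (k + 1).choose 2 := by
  rw [Fin.sum_univ_eq_sum_range (fun j => j + 1), Nat.choose_two_right, ← Finset.sum_range_id,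
    Finset.sum_range_succ', add_zero]

theorem succ_choose_two_le_sq (k : ℕ) : (k + 1).choose 2 ≤ k ^ 2 := by
  rw [Nat.choose_two_right, Nat.add_sub_cancel]
  exact Nat.div_le_of_le_mul (by nlinarith [Nat.le_self_pow two_ne_zero k])

section Rank

variable {F : Type*} [Field F] {n k : ℕ} {V : Submodule F (MvPolynomial (Fin n) F)}

theorem finiteDimensional_of_le_homogeneousSubmodule {d : ℕ}
    (hV : V ≤ MvPolynomial.homogeneousSubmodule (Fin n) F d) : FiniteDimensional F V :=
  have := Module.Finite.iff_fg.2 (MvPolynomial.homogeneousSubmodule_fg (σ := Fin n) (R := F) d)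
  Submodule.finiteDimensional_of_le hV

theorem finrank_map_vandermondeSubst_le (hV : V ≤ MvPolynomial.homogeneousSubmodule (Fin n) F 1)
    (β : F) :
    Module.finrank F (V.map (vandermondeSubst n k β).toLinearMap) ≤
      min k (Module.finrank F V) := by
  have := finiteDimensional_of_le_homogeneousSubmodule hV
  have := finiteDimensional_of_le_homogeneousSubmodule (le_refl
    (MvPolynomial.homogeneousSubmodule (Fin k) F 1))
  refine le_min ?_ (Submodule.finrank_map_le _ _)
  exact (Submodule.finrank_mono ((Submodule.map_mono hV).trans
    (map_vandermondeSubst_le_homogeneousSubmodule β))).trans (finrank_homogeneousSubmodule_one_le k)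

theorem exists_le_finrank_map_vandermondeSubst
    (hV : V ≤ MvPolynomial.homogeneousSubmodule (Fin n) F 1) {r : ℕ} (hrk : r ≤ k)
    (hrV : r ≤ Module.finrank F V)
    (hF : ((n * (r + 1).choose 2 : ℕ) : Cardinal) < Cardinal.mk F) :
    ∃ β : F, r ≤ Module.finrank F (V.map (vandermondeSubst n k β).toLinearMap) := by
  have := finiteDimensional_of_le_homogeneousSubmodule hV
  rw [← finrank_map_eq_of_disjoint_ker
    (disjoint_homogeneousSubmodule_one_ker_powerSubst.mono_left hV)] at hrV
  obtain ⟨p, hp, hdeg⟩ := exists_strictMono_natDegree_of_le_finrank hrV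
  choose ℓ hℓV hℓp using fun a => (hp a).1
  have natDegree_le (a) : (p a).natDegree ≤ n := hℓp a ▸ natDegree_powerSubst_le (hV (hℓV a))
  have degree_bound : ∑ a, (p a).natDegree * (a.1 + 1) ≤ n * (r + 1).choose 2 := by
    rw [← sum_fin_val_add_one, Finset.mul_sum]
    exact Finset.sum_le_sum fun a _ => Nat.mul_le_mul_right _ (natDegree_le a)
  obtain ⟨β, hβ⟩ := exists_det_eval_pow_ne_zero (fun a => (hp a).2) hdeg
    (e := fun j => j.1 + 1) (fun _ _ hij => Nat.succ_lt_succ hij) (fun _ => Nat.succ_pos _)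
    ((Nat.cast_le.2 degree_bound).trans_lt hF)
  refine ⟨β, ?_⟩
  let coeffY (j : Fin r) : Module.Dual F (MvPolynomial (Fin k) F) :=
    (MvPolynomial.aeval (Pi.single (Fin.castLE hrk j) 1)).toLinearMap
  have coeffY_eq (a j) : coeffY j (vandermondeSubst n k β (ℓ a)) = (p a).eval (β ^ (j.1 + 1)) := by
    rw [← hℓp a]
    exact aeval_single_vandermondeSubst β _ (ℓ a)
  simpa using card_le_finrank_of_det_ne_zero
    (fun a => Submodule.mem_map_of_mem (f := (vandermondeSubst n k β).toLinearMap) (hℓV a))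
    coeffY (by simpa only [AlgHom.toLinearMap_apply, coeffY_eq] using hβ)

end Rank

theorem vandermonde_preserves_rank_general {F : Type*} [Field F] {n k : ℕ}
    (hF : ((n * (k + 1).choose 2 : ℕ) : Cardinal) < Cardinal.mk F)
    {S : Set (MvPolynomial (Fin n) F)} (hS : ∀ ℓ ∈ S, ℓ.IsHomogeneous 1) :
    ∃ β : F, Module.finrank F (Submodule.span F (vandermondeSubst n k β '' S)) =
      min k (Module.finrank F (Submodule.span F S)) := by
  have hV : Submodule.span F S ≤ MvPolynomial.homogeneousSubmodule (Fin n) F 1 :=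
    Submodule.span_le.2 hS
  have card_bound : n * (min k (Module.finrank F (Submodule.span F S)) + 1).choose 2 ≤
      n * (k + 1).choose 2 := by
    gcongr
    exact min_le_left _ _
  obtain ⟨β, hβ⟩ := exists_le_finrank_map_vandermondeSubst hV (min_le_left _ _) (min_le_right _ _)
    ((Nat.cast_le.2 card_bound).trans_lt hF)
  refine ⟨β, ?_⟩
  rw [← AlgHom.coe_toLinearMap, ← Submodule.map_span]
  exact (finrank_map_vandermondeSubst_le hV β).antisymm hβ

/-- Vandermonde map preserves k-rank: over a field `F` with `|F| > n·k²`, for any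
finite set `S` of linear forms in `F[x₁,…,xₙ]` whose span has dimension at most `k`,
there exists `β ∈ F` such that the substitution `xᵢ ↦ Σ_{j=1}^k β^{ij} yⱼ`
preserves the dimension of the linear span of `S`. -/
theorem vandermonde_preserves_rank (F : Type*) [Field F] (n k : ℕ)
    (hF : ((n * k ^ 2 : ℕ) : Cardinal) < Cardinal.mk F)
    (S : Finset (MvPolynomial (Fin n) F))
    (hhom : ∀ ℓ ∈ S, MvPolynomial.IsHomogeneous ℓ 1)
    (hrk : Module.finrank F (Submodule.span F (S : Set (MvPolynomial (Fin n) F))) ≤ k) :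
    ∃ β : F,
      Module.finrank F (Submodule.span F
        ((fun p => MvPolynomial.aeval
            (fun i : Fin n =>
              ∑ j : Fin k, β ^ ((i.1 + 1) * (j.1 + 1)) • MvPolynomial.X (R := F) j) p) '' (S : Set (MvPolynomial (Fin n) F)))) =
      Module.finrank F (Submodule.span F (S : Set (MvPolynomial (Fin n) F))) := by
  have hF' := (Nat.cast_le.2 (Nat.mul_le_mul_left n (succ_choose_two_le_sq k))).trans_lt hF
  exact (vandermonde_preserves_rank_general hF' hhom).imp fun _ hβ => hβ.trans (min_eq_right hrk)
end

section
/- Faithful maps are useful for identity testing: Let F be a field, let φ : F[x_1,…,x_n] → F[y_1,…,y_k] be an F-algebra homomorphism, and let f_1,…,f_m ∈ F[x_1,…,x_n]. Suppose φ is faithful to f = {f_1,…,f_m}, i.e., trdeg_F{f_1,…,f_m} = trdeg_F{φ(f_1),…,φ(f_m)}. Then for every polynomial C ∈ F[z_1,…,z_m]: C(f_1,…,f_m) = 0 in F[x_1,…,x_n] if and only if C(φ(f_1),…,φ(f_m)) = 0 in F[y_1,…,y_k]. -/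
open scoped Classical

/-- The transcendence degree of a finite set `s` of elements of an `F`-algebra:
the largest cardinality of a subset of `s` that is algebraically independent
over `F` (algebraic independence meaning that no nonzero polynomial over `F`
annihilates the elements). -/
noncomputable def fintrdeg (F : Type*) [CommRing F] {A : Type*} [CommRing A]
    [Algebra F A] (s : Finset A) : ℕ :=
  sSup {m | ∃ t : Finset A, t ⊆ s ∧ t.card = m ∧
    AlgebraicIndependent F (fun x : (t : Set A) => (x : A))}

/-!
Let `s = {f₁,…,f_m}`. Choose an algebraically independent subset `u` of `φ(s)` of maximal size and
lift it to `t ⊆ s` so that `φ` maps `t` bijectively onto `u`. Then `φ` is injective on `F[t]`,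
because the images of the generators are independent. Since `φ` preserves the transcendence degree
of `s`, `t` is also a maximal independent subset of `s`, so every element `a` of `F[s]` is algebraic
over `F[t]`. If `a ≠ 0`, it divides a nonzero element of `F[t]`, which `φ` does not kill; hence
`φ a ≠ 0`.
-/

section Fintrdeg

variable {F A : Type*} [CommRing F] [CommRing A] [Algebra F A]

variable (F) in
theorem bddAbove_card_algebraicIndependent_subset (s : Finset A) :
    BddAbove {m | ∃ t : Finset A, t ⊆ s ∧ t.card = m ∧
      AlgebraicIndependent F (fun x : (t : Set A) => (x : A))} := by
  refine ⟨s.card, ?_⟩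
  rintro _ ⟨t, hts, rfl, -⟩
  exact Finset.card_le_card hts

theorem card_le_fintrdeg {s t : Finset A} (hts : t ⊆ s)
    (ht : AlgebraicIndepOn F id (t : Set A)) : t.card ≤ fintrdeg F s :=
  le_csSup (bddAbove_card_algebraicIndependent_subset F s) ⟨t, hts, rfl, ht⟩

variable (F) in
theorem exists_algebraicIndepOn_card_eq_fintrdeg [FaithfulSMul F A] (s : Finset A) :
    ∃ t ⊆ s, t.card = fintrdeg F s ∧ AlgebraicIndepOn F id (t : Set A) := by
  have empty_indep : AlgebraicIndepOn F id ((∅ : Finset A) : Set A) := by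
    rw [Finset.coe_empty]
    exact algebraicIndependent_empty_type_iff.mpr (FaithfulSMul.algebraMap_injective F A)
  refine Nat.sSup_mem ?_ (bddAbove_card_algebraicIndependent_subset F s)
  exact ⟨0, ∅, s.empty_subset, Finset.card_empty, empty_indep⟩

theorem isAlgebraic_adjoin_of_fintrdeg_le_card [Nontrivial A] {s t : Finset A} (hts : t ⊆ s)
    (ht : AlgebraicIndepOn F id (t : Set A)) (hcard : fintrdeg F s ≤ t.card) {a : A}
    (ha : a ∈ s) : IsAlgebraic (Algebra.adjoin F (t : Set A)) a := by
  by_contra htrans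
  have hat : a ∉ t := fun hat ↦
    htrans (isAlgebraic_algebraMap (⟨a, Algebra.subset_adjoin hat⟩ : Algebra.adjoin F (t : Set A)))
  have insert_indep : AlgebraicIndepOn F id ((insert a t : Finset A) : Set A) := by
    rw [Finset.coe_insert]
    exact ht.insert (by rwa [Set.image_id])
  have card_insert_le := card_le_fintrdeg (Finset.insert_subset ha hts) insert_indep
  rw [Finset.card_insert_of_notMem hat] at card_insert_le
  omega

end Fintrdeg

section InjOn

variable {F A B : Type*} [CommRing F] [CommRing A] [CommRing B] [Algebra F A] [Algebra F B]
  {φ : A →ₐ[F] B}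

theorem injOn_adjoin_range_of_algebraicIndependent_comp {ι : Type*} {x : ι → A}
    (h : AlgebraicIndependent F (φ ∘ x)) : Set.InjOn φ (Algebra.adjoin F (Set.range x)) := by
  rw [Algebra.adjoin_range_eq_range_aeval]
  rintro _ ⟨p, rfl⟩ _ ⟨q, rfl⟩ (hpq : φ (MvPolynomial.aeval x p) = φ (MvPolynomial.aeval x q))
  rw [MvPolynomial.comp_aeval_apply, MvPolynomial.comp_aeval_apply] at hpq
  rw [h hpq]

theorem injOn_algebraicClosure_of_injOn [IsDomain A] {S : Subalgebra F A} (h : Set.InjOn φ S) :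
    Set.InjOn φ (Subalgebra.algebraicClosure S A) := by
  intro a ha b hb hab
  by_contra hne
  obtain ⟨r, hr, c, hrc : (r : A) = (a - b) * c⟩ := (IsAlgebraic.sub ha hb).exists_nonzero_dvd
    (mem_nonZeroDivisors_of_ne_zero (sub_ne_zero.mpr hne))
  have map_r : φ r = φ 0 := by
    rw [hrc, map_mul, map_sub, hab, sub_self, zero_mul, map_zero]
  exact hr (Subtype.ext (h r.2 S.zero_mem map_r))

theorem exists_subset_card_eq_fintrdeg_image_injOn_adjoin [FaithfulSMul F B] [DecidableEq B]
    (φ : A →ₐ[F] B) (s : Finset A) :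
    ∃ t ⊆ s, t.card = fintrdeg F (s.image φ) ∧ AlgebraicIndepOn F id (t : Set A) ∧
      Set.InjOn φ (Algebra.adjoin F (t : Set A)) := by
  obtain ⟨u, hus, hucard, hu⟩ := exists_algebraicIndepOn_card_eq_fintrdeg F (s.image φ)
  obtain ⟨t, hts, hinj, rfl⟩ := Finset.exists_subset_injOn_image_eq_of_surjOn (f := φ) s u
    fun _ hb ↦ by simpa using hus hb
  have image_indep : AlgebraicIndependent F (fun x : (t : Set A) ↦ φ x) := by
    rw [Finset.coe_image] at hu
    exact (algebraicIndependent_image hinj).mpr hu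
  refine ⟨t, Finset.coe_subset.mp hts, ?_, image_indep.of_comp φ, ?_⟩
  · rw [← hucard, Finset.card_image_of_injOn hinj]
  · simpa only [Subtype.range_coe] using
      injOn_adjoin_range_of_algebraicIndependent_comp image_indep

theorem injOn_adjoin_of_fintrdeg_le_fintrdeg_image [IsDomain A] [FaithfulSMul F B]
    [DecidableEq B] {s : Finset A} (h : fintrdeg F s ≤ fintrdeg F (s.image φ)) :
    Set.InjOn φ (Algebra.adjoin F (s : Set A)) := by
  obtain ⟨t, hts, htcard, ht, hinj⟩ := exists_subset_card_eq_fintrdeg_image_injOn_adjoin φ s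
  let S := Algebra.adjoin F (t : Set A)
  have adjoin_le : Algebra.adjoin F (s : Set A) ≤
      (Subalgebra.algebraicClosure S A).restrictScalars F :=
    Algebra.adjoin_le fun _ ha ↦
      isAlgebraic_adjoin_of_fintrdeg_le_card hts ht (h.trans_eq htcard.symm) ha
  exact (injOn_algebraicClosure_of_injOn hinj).mono adjoin_le

end InjOn

theorem faithful_useful_general {F A B ι : Type*} [CommRing F] [CommRing A] [IsDomain A]
    [CommRing B] [Algebra F A] [Algebra F B] [FaithfulSMul F B] [Fintype ι] [DecidableEq A]
    [DecidableEq B] (φ : A →ₐ[F] B) (f : ι → A)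
    (hfaithful : fintrdeg F (Finset.univ.image f) ≤ fintrdeg F (Finset.univ.image (φ ∘ f)))
    (C : MvPolynomial ι F) :
    MvPolynomial.aeval f C = 0 ↔ MvPolynomial.aeval (φ ∘ f) C = 0 := by
  rw [← Finset.image_image] at hfaithful
  have hinj : Set.InjOn φ (Algebra.adjoin F (Set.range f)) := by
    simpa using injOn_adjoin_of_fintrdeg_le_fintrdeg_image hfaithful
  have aeval_mem : MvPolynomial.aeval f C ∈ Algebra.adjoin F (Set.range f) := by
    rw [Algebra.adjoin_range_eq_range_aeval]
    exact AlgHom.mem_range_self _ C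
  calc MvPolynomial.aeval f C = 0
      ↔ φ (MvPolynomial.aeval f C) = φ 0 := (hinj.eq_iff aeval_mem (zero_mem _)).symm
    _ ↔ MvPolynomial.aeval (φ ∘ f) C = 0 := by rw [MvPolynomial.comp_aeval_apply, map_zero]; rfl

/-- Faithful maps are useful for identity testing: if an `F`-algebra homomorphism
`φ : F[x₁,…,xₙ] → F[y₁,…,y_k]` preserves the transcendence degree of
`{f₁,…,f_m}`, then for every polynomial `C ∈ F[z₁,…,z_m]` we have
`C(f₁,…,f_m) = 0` iff `C(φ(f₁),…,φ(f_m)) = 0`. -/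
theorem faithful_useful (F : Type*) [Field F] (n k m : ℕ)
    (φ : MvPolynomial (Fin n) F →ₐ[F] MvPolynomial (Fin k) F)
    (f : Fin m → MvPolynomial (Fin n) F)
    (hfaithful : fintrdeg F (Finset.image f Finset.univ) =
      fintrdeg F (Finset.image (fun i => φ (f i)) Finset.univ)) :
    ∀ C : MvPolynomial (Fin m) F,
      MvPolynomial.aeval f C = 0 ↔ MvPolynomial.aeval (fun i => φ (f i)) C = 0 := by
  exact faithful_useful_general φ f hfaithful.le
end

section
/- Lifting a linear dependence through the shift (transfer identity): Let R be a commutative F-algebra over a field F, let ℓ ≥ 1, and let z_1,…,z_ℓ ∈ R and t_1,…,t_ℓ ∈ F be such that each u_i := 1 + t_i·z_i is a unit of R; set z'_i := z_i·u_i^{-1}. Suppose scalars α_S ∈ F for S ⊆ {1,…,ℓ} satisfy Σ_{S ⊆ {1,…,ℓ}} α_S · Π_{i∈S} z_i = 0. Then Σ_{S ⊆ {1,…,ℓ}} α_S · (Π_{i∈S} z'_i) · (Π_{i∈{1,…,ℓ}∖S} (1 − t_i·z'_i)) = 0. -/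
theorem one_sub_smul_mul_inverse_one_add_smul {A R : Type*} [Ring R] [SMul A R]
    [IsScalarTower A R R] {a : A} {x : R} (hu : IsUnit (1 + a • x)) :
    1 - a • (x * Ring.inverse (1 + a • x)) = Ring.inverse (1 + a • x) := by
  rw [sub_eq_iff_eq_add, ← smul_mul_assoc, ← one_add_mul, Ring.mul_inverse_cancel _ hu]

theorem prod_mul_mul_prod_compl {ι M : Type*} [Fintype ι] [DecidableEq ι] [CommMonoid M]
    (S : Finset ι) (f g : ι → M) :
    (∏ i ∈ S, f i * g i) * ∏ i ∈ Sᶜ, g i = (∏ i ∈ S, f i) * ∏ i, g i := by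
  rw [Finset.prod_mul_distrib, mul_assoc, Finset.prod_mul_prod_compl]

theorem transfer_lift_general {ι A R : Type*} [Fintype ι] [DecidableEq ι] [CommRing R]
    [SMul A R] [IsScalarTower A R R] (z : ι → R) (t : ι → A)
    (hu : ∀ i, IsUnit (1 + t i • z i)) (α : Finset ι → A) :
    ∑ S : Finset ι, α S •
        ((∏ i ∈ S, z i * Ring.inverse (1 + t i • z i)) *
          ∏ i ∈ Sᶜ, (1 - t i • (z i * Ring.inverse (1 + t i • z i)))) =
      (∑ S : Finset ι, α S • ∏ i ∈ S, z i) * ∏ i, Ring.inverse (1 + t i • z i) := by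
  simp only [one_sub_smul_mul_inverse_one_add_smul (hu _), prod_mul_mul_prod_compl,
    Finset.sum_mul, smul_mul_assoc]

/-- Lifting a linear dependence through the shift (transfer identity): if each
`uᵢ = 1 + tᵢ zᵢ` is a unit of the commutative `F`-algebra `R`, `z'ᵢ = zᵢ uᵢ⁻¹`,
and `Σ_S α_S Π_{i∈S} zᵢ = 0`, then
`Σ_S α_S (Π_{i∈S} z'ᵢ) (Π_{i∉S} (1 - tᵢ z'ᵢ)) = 0`. -/
theorem transfer_lift (F : Type*) [Field F] (R : Type*) [CommRing R] [Algebra F R]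
    (ℓ : ℕ) (hℓ : 1 ≤ ℓ) (z : Fin ℓ → R) (t : Fin ℓ → F)
    (hu : ∀ i, IsUnit (1 + t i • z i))
    (α : Finset (Fin ℓ) → F)
    (hdep : ∑ S : Finset (Fin ℓ), α S • ∏ i ∈ S, z i = 0) :
    ∑ S : Finset (Fin ℓ), α S •
        ((∏ i ∈ S, z i * Ring.inverse (1 + t i • z i)) *
          ∏ i ∈ Sᶜ, (1 - t i • (z i * Ring.inverse (1 + t i • z i)))) = 0 := by
  rw [transfer_lift_general z t hu α, hdep, zero_mul]
end

section
/- Low-support rank concentration for products of disjoint-variable linear factors after a shift (toy model of ASS13): Let F be an infinite field, k, n ≥ 1, and z_1,…,z_n ∈ F^k, where F^k is the commutative ring with coordinatewise operations. Let ℓ := ⌊log₂ k⌋ + 2. Then there exist t_1,…,t_n ∈ F such that the shifted polynomial D' = Π_{i=1}^{n} (1 + z_i·(x_i + t_i)) ∈ (F^k)[x_1,…,x_n] is ℓ-concentrated. -/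
/-- A polynomial `f` over the Hadamard algebra `F^k` (the ring `Fin k → F` with
coordinatewise operations) is `ℓ`-concentrated if the `F`-linear span of the
coefficients of its monomials of support size `< ℓ` equals the `F`-linear span
of all of its coefficients. -/
def Concentrated (F : Type*) [Field F] {k n : ℕ} (ℓ : ℕ)
    (f : MvPolynomial (Fin n) (Fin k → F)) : Prop :=
  Submodule.span F
      {v : Fin k → F | ∃ m : Fin n →₀ ℕ, m.support.card < ℓ ∧ v = MvPolynomial.coeff m f} =
    Submodule.span F {v : Fin k → F | ∃ m : Fin n →₀ ℕ, v = MvPolynomial.coeff m f}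

/-!
Write `y i = 1 + t i • z i`, so that the coefficient of `∏ i ∈ S, X i` in the shifted product is
`(∏ i ∈ S, z i) * ∏ i ∈ Sᶜ, y i`. Expanding `∏ i ∈ T, (y i - t i • z i) = 1` expresses
`∏ i ∈ S \ T, z i`, modulo the elements `(∏ i ∈ V, z i) * ∏ i ∈ S \ V, y i` with `V ⊂ S`, as
`∏ i ∈ T, (-t i)` times `∏ i ∈ S, z i`. If `2 ^ #S` exceeds the dimension, the products
`∏ i ∈ S \ T, z i` satisfy a nontrivial linear relation with coefficients `c T`. Hence the value
at `-t` of the nonzero polynomial `∑ T ⊆ S, c T * ∏ i ∈ T, X i`, times the coefficient at `S`,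
lies in the span of the coefficients at proper subsets of `S`. Over an infinite field some `t`
makes all these values nonzero, and induction on `S` concludes.
-/

open MvPolynomial

section SquarefreePoly

variable {σ R : Type*} [CommSemiring R]

/-- The polynomial `∑ T ⊆ s, c T * ∏ i ∈ T, X i` with squarefree monomials in the variables of `s`
and prescribed coefficients. Both the shifted product and the polynomials that a good shift has to
avoid are of this form. -/
noncomputable def squarefreePoly (s : Finset σ) (c : Finset σ → R) : MvPolynomial σ R :=
  ∑ T ∈ s.powerset, C (c T) * ∏ i ∈ T, X i

theorem eval_squarefreePoly (s : Finset σ) (c : Finset σ → R) (x : σ → R) :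
    eval x (squarefreePoly s c) = ∑ T ∈ s.powerset, c T * ∏ i ∈ T, x i := by
  simp [squarefreePoly]

theorem prod_X_eq_monomial_toFinsupp [DecidableEq σ] (T : Finset σ) :
    ∏ i ∈ T, (X i : MvPolynomial σ R) = monomial (Multiset.toFinsupp T.val) 1 := by
  rw [← prod_X_pow_eq_monomial, Multiset.toFinsupp_support, Finset.val_toFinset]
  refine Finset.prod_congr rfl fun i hi ↦ ?_
  rw [Multiset.toFinsupp_apply, Multiset.count_eq_one_of_mem T.nodup hi, pow_one]

theorem coeff_squarefreePoly [DecidableEq σ] (s : Finset σ) (c : Finset σ → R) (m : σ →₀ ℕ) :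
    coeff m (squarefreePoly s c) =
      ∑ T ∈ s.powerset, if Multiset.toFinsupp T.val = m then c T else 0 := by
  simp only [squarefreePoly, coeff_sum, coeff_C_mul, prod_X_eq_monomial_toFinsupp, coeff_monomial,
    mul_ite, mul_one, mul_zero]

theorem coeff_toFinsupp_squarefreePoly [DecidableEq σ] {s T : Finset σ} (hT : T ⊆ s)
    (c : Finset σ → R) :
    coeff (Multiset.toFinsupp T.val) (squarefreePoly s c) = c T := by
  simp [coeff_squarefreePoly, hT]

theorem squarefreePoly_ne_zero {s T : Finset σ} (hT : T ⊆ s) {c : Finset σ → R} (hc : c T ≠ 0) :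
    squarefreePoly s c ≠ 0 := by
  classical
  intro h
  rw [← coeff_toFinsupp_squarefreePoly hT c, h, coeff_zero] at hc
  exact hc rfl

end SquarefreePoly

theorem exists_forall_eval_ne_zero {ι σ R : Type*} [CommRing R] [IsDomain R] [Infinite R]
    (s : Finset ι) (p : ι → MvPolynomial σ R) (hp : ∀ i ∈ s, p i ≠ 0) :
    ∃ x : σ → R, ∀ i ∈ s, eval x (p i) ≠ 0 := by
  have hprod : ∏ i ∈ s, p i ≠ 0 := Finset.prod_ne_zero_iff.2 hp
  rw [Ne, MvPolynomial.funext_iff, not_forall] at hprod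
  obtain ⟨x, hx⟩ := hprod
  rw [map_prod, map_zero] at hx
  exact ⟨x, Finset.prod_ne_zero_iff.1 hx⟩

section Concentration

variable {σ : Type*} (F : Type*) {A : Type*} [Semiring F] [CommSemiring A] [Module F A]

/-- `ℓ`-concentration for coefficients in any ring `A` that is an `F`-module and for any set of
variables; `Concentrated` is the case `A = F^k` with variables indexed by `Fin n`. -/
def IsConcentrated (ℓ : ℕ) (f : MvPolynomial σ A) : Prop :=
  Submodule.span F {v : A | ∃ m : σ →₀ ℕ, m.support.card < ℓ ∧ v = coeff m f} =
    Submodule.span F {v : A | ∃ m : σ →₀ ℕ, v = coeff m f}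

variable {F}

theorem mem_span_image_card_lt {M : Type*} [AddCommMonoid M] [Module F M] {ℓ : ℕ} {s : Finset σ}
    {c : Finset σ → M}
    (hc : ∀ S ⊆ s, ℓ ≤ S.card → c S ∈ Submodule.span F (c '' {V | V ⊂ S}))
    {S : Finset σ} (hS : S ⊆ s) :
    c S ∈ Submodule.span F (c '' {V | V ⊆ s ∧ V.card < ℓ}) := by
  induction S using Finset.strongInduction with
  | H S ih =>
    rcases lt_or_ge S.card ℓ with hlow | hhigh
    · exact Submodule.subset_span ⟨S, ⟨hS, hlow⟩, rfl⟩
    · refine Submodule.span_le.2 ?_ (hc S hS hhigh)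
      rintro _ ⟨V, hV, rfl⟩
      exact ih V hV (hV.subset.trans hS)

theorem isConcentrated_squarefreePoly {ℓ : ℕ} {s : Finset σ} {c : Finset σ → A}
    (hc : ∀ S ⊆ s, ℓ ≤ S.card → c S ∈ Submodule.span F (c '' {V | V ⊂ S})) :
    IsConcentrated F ℓ (squarefreePoly s c) := by
  classical
  refine le_antisymm (Submodule.span_mono fun v ⟨m, _, hv⟩ ↦ ⟨m, hv⟩) (Submodule.span_le.2 ?_)
  have hlow : c '' {V | V ⊆ s ∧ V.card < ℓ} ⊆
      {v | ∃ m : σ →₀ ℕ, m.support.card < ℓ ∧ v = coeff m (squarefreePoly s c)} := by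
    rintro _ ⟨V, ⟨hVs, hVℓ⟩, rfl⟩
    refine ⟨Multiset.toFinsupp V.val, ?_, (coeff_toFinsupp_squarefreePoly hVs c).symm⟩
    rwa [Multiset.toFinsupp_support, Finset.val_toFinset]
  rintro _ ⟨m, rfl⟩
  rw [SetLike.mem_coe, coeff_squarefreePoly]
  refine Submodule.sum_mem _ fun S hS ↦ ?_
  split_ifs
  · exact Submodule.span_mono hlow (mem_span_image_card_lt hc (Finset.mem_powerset.1 hS))
  · exact Submodule.zero_mem _

end Concentration

section ShiftedCoeff

variable {σ R A : Type*} [CommSemiring R] [CommSemiring A] [Algebra R A] [DecidableEq σ]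

/-- The coefficient of `∏ i ∈ S, X i` in the shifted product
`∏ i ∈ s, (1 + z i * (X i + t i))`, meaningful for `S ⊆ s`. -/
def shiftedCoeff (z : σ → A) (t : σ → R) (s S : Finset σ) : A :=
  (∏ i ∈ S, z i) * ∏ i ∈ s \ S, (1 + t i • z i)

theorem prod_shifted_eq_squarefreePoly (z : σ → A) (t : σ → R) (s : Finset σ) :
    ∏ i ∈ s, (1 + C (z i) * (X i + C (algebraMap R A (t i)))) =
      squarefreePoly s (shiftedCoeff z t s) := by
  have hfactor (i : σ) : 1 + C (z i) * (X i + C (algebraMap R A (t i))) =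
      C (z i) * X i + C (1 + t i • z i) := by
    rw [Algebra.smul_def, map_add, map_mul, map_one]
    ring
  rw [Finset.prod_congr rfl fun i _ ↦ hfactor i, Finset.prod_add]
  simp only [squarefreePoly, shiftedCoeff, Finset.prod_mul_distrib, map_mul, map_prod,
    mul_right_comm]

theorem shiftedCoeff_self (z : σ → A) (t : σ → R) (S : Finset σ) :
    shiftedCoeff z t S S = ∏ i ∈ S, z i := by
  simp [shiftedCoeff]

theorem shiftedCoeff_mul_prod_sdiff (z : σ → A) (t : σ → R) {s S V : Finset σ} (hS : S ⊆ s)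
    (hV : V ⊆ S) :
    shiftedCoeff z t S V * ∏ i ∈ s \ S, (1 + t i • z i) = shiftedCoeff z t s V := by
  have hdisj : Disjoint (s \ S) (S \ V) := Finset.sdiff_disjoint.mono_right Finset.sdiff_subset
  rw [shiftedCoeff, shiftedCoeff, ← Finset.sdiff_union_sdiff_cancel hS hV,
    Finset.prod_union hdisj]
  ring

theorem shiftedCoeff_mem_span_of_prod_mem_span {z : σ → A} {t : σ → R} {s S : Finset σ}
    (hS : S ⊆ s)
    (hprod : ∏ i ∈ S, z i ∈ Submodule.span R (shiftedCoeff z t S '' {V | V ⊂ S})) :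
    shiftedCoeff z t s S ∈ Submodule.span R (shiftedCoeff z t s '' {V | V ⊂ S}) := by
  let mulRest : A →ₗ[R] A := LinearMap.mulRight R (∏ i ∈ s \ S, (1 + t i • z i))
  have himage : mulRest '' (shiftedCoeff z t S '' {V | V ⊂ S}) =
      shiftedCoeff z t s '' {V | V ⊂ S} := by
    rw [Set.image_image]
    exact Set.image_congr fun V hV ↦ shiftedCoeff_mul_prod_sdiff z t hS hV.subset
  rw [← himage, Submodule.span_image]
  exact Submodule.mem_map_of_mem hprod

end ShiftedCoeff

section ReductionToProperSubsets

variable {σ R A : Type*} [CommRing R] [CommRing A] [Algebra R A] [DecidableEq σ]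

theorem prod_sdiff_eq_sum_smul_shiftedCoeff (z : σ → A) (t : σ → R) {S T : Finset σ}
    (hT : T ⊆ S) :
    ∏ i ∈ S \ T, z i =
      ∑ V ∈ T.powerset, (∏ i ∈ T \ V, (-t i)) • shiftedCoeff z t S (S \ V) := by
  have hone : ∏ i ∈ T, ((1 + t i • z i) + (-t i) • z i) = 1 :=
    Finset.prod_eq_one fun i _ ↦ by rw [neg_smul, add_neg_cancel_right]
  rw [← mul_one (∏ i ∈ S \ T, z i), ← hone, Finset.prod_add, Finset.mul_sum]
  refine Finset.sum_congr rfl fun V hV ↦ ?_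
  have hVT : V ⊆ T := Finset.mem_powerset.1 hV
  have hdisj : Disjoint (S \ T) (T \ V) := Finset.sdiff_disjoint.mono_right Finset.sdiff_subset
  rw [shiftedCoeff, Finset.sdiff_sdiff_eq_self (hVT.trans hT),
    ← Finset.sdiff_union_sdiff_cancel hT hVT, Finset.prod_union hdisj, Finset.prod_smul,
    mul_smul_comm, mul_smul_comm]
  congr 1
  ring

theorem prod_sdiff_sub_smul_prod_mem_span (z : σ → A) (t : σ → R) {S T : Finset σ} (hT : T ⊆ S) :
    ∏ i ∈ S \ T, z i - (∏ i ∈ T, (-t i)) • ∏ i ∈ S, z i ∈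
      Submodule.span R (shiftedCoeff z t S '' {V | V ⊂ S}) := by
  rw [prod_sdiff_eq_sum_smul_shiftedCoeff z t hT,
    ← Finset.sum_erase_add _ _ (Finset.empty_mem_powerset T), Finset.sdiff_empty,
    Finset.sdiff_empty, shiftedCoeff_self, add_sub_cancel_right]
  refine Submodule.sum_mem _ fun V hV ↦ Submodule.smul_mem _ _ (Submodule.subset_span ?_)
  obtain ⟨hV_ne, hVT⟩ := Finset.mem_erase.1 hV
  refine ⟨S \ V, Finset.sdiff_ssubset ((Finset.mem_powerset.1 hVT).trans hT) ?_, rfl⟩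
  exact Finset.nonempty_iff_ne_empty.2 hV_ne

theorem eval_smul_prod_mem_span_of_relation {z : σ → A} (t : σ → R) {S : Finset σ}
    {c : Finset σ → R} (hrel : ∑ T ∈ S.powerset, c T • ∏ i ∈ S \ T, z i = 0) :
    eval (-t) (squarefreePoly S c) • ∏ i ∈ S, z i ∈
      Submodule.span R (shiftedCoeff z t S '' {V | V ⊂ S}) := by
  have hsum : ∑ T ∈ S.powerset, c T • (∏ i ∈ S \ T, z i - (∏ i ∈ T, (-t i)) • ∏ i ∈ S, z i) ∈
      Submodule.span R (shiftedCoeff z t S '' {V | V ⊂ S}) :=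
    Submodule.sum_mem _ fun T hT ↦ Submodule.smul_mem _ _
      (prod_sdiff_sub_smul_prod_mem_span z t (Finset.mem_powerset.1 hT))
  simp only [smul_sub, smul_smul] at hsum
  rw [Finset.sum_sub_distrib, hrel, zero_sub, Submodule.neg_mem_iff, ← Finset.sum_smul] at hsum
  rwa [eval_squarefreePoly]

end ReductionToProperSubsets

section Field

variable {σ F A : Type*} [Field F] [CommRing A] [Algebra F A] [Module.Finite F A] [DecidableEq σ]

theorem exists_relation_prod_sdiff (z : σ → A) {S : Finset σ}
    (hS : Module.finrank F A < 2 ^ S.card) :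
    ∃ c : Finset σ → F, ∑ T ∈ S.powerset, c T • ∏ i ∈ S \ T, z i = 0 ∧ ∃ T ⊆ S, c T ≠ 0 := by
  have hdep : ¬ LinearIndepOn F (fun T ↦ ∏ i ∈ S \ T, z i) (S.powerset : Set (Finset σ)) := by
    intro hindep
    have hcard : S.powerset.card ≤ Module.finrank F A := by
      simpa using hindep.linearIndependent.fintype_card_le_finrank
    exact hS.not_ge (Finset.card_powerset S ▸ hcard)
  simpa only [not_linearIndepOn_finset_iff, Finset.mem_powerset] using hdep

theorem exists_shift_forall_prod_mem_span [Infinite F] (z : σ → A) (s : Finset σ) :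
    ∃ t : σ → F, ∀ S ⊆ s, Module.finrank F A < 2 ^ S.card →
      ∏ i ∈ S, z i ∈ Submodule.span F (shiftedCoeff z t S '' {V | V ⊂ S}) := by
  choose! c hrel hne using fun S : Finset σ ↦ exists_relation_prod_sdiff (F := F) z (S := S)
  obtain ⟨x, hx⟩ := exists_forall_eval_ne_zero
    (s.powerset.filter fun S ↦ Module.finrank F A < 2 ^ S.card) (fun S ↦ squarefreePoly S (c S))
    fun S hS ↦ by
      obtain ⟨T, hTS, hT⟩ := hne S (Finset.mem_filter.1 hS).2
      exact squarefreePoly_ne_zero hTS hT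
  refine ⟨-x, fun S hSs hS ↦ ?_⟩
  have hmul := eval_smul_prod_mem_span_of_relation (-x) (hrel S hS)
  rw [neg_neg] at hmul
  have heval := hx S (Finset.mem_filter.2 ⟨Finset.mem_powerset.2 hSs, hS⟩)
  exact (Submodule.smul_mem_iff _ heval).1 hmul

end Field

theorem shift_concentration_general {σ F A : Type*} [Field F] [Infinite F] [CommRing A]
    [Algebra F A] [Module.Finite F A] {ℓ : ℕ} (hℓ : Module.finrank F A < 2 ^ ℓ) (s : Finset σ)
    (z : σ → A) :
    ∃ t : σ → F,
      IsConcentrated F ℓ (∏ i ∈ s, (1 + C (z i) * (X i + C (algebraMap F A (t i))))) := by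
  classical
  obtain ⟨t, ht⟩ := exists_shift_forall_prod_mem_span (F := F) z s
  refine ⟨t, ?_⟩
  rw [prod_shifted_eq_squarefreePoly]
  refine isConcentrated_squarefreePoly fun S hSs hS ↦ ?_
  exact shiftedCoeff_mem_span_of_prod_mem_span hSs
    (ht S hSs (hℓ.trans_le (Nat.pow_le_pow_right two_pos hS)))

/-- Low-support rank concentration after a shift (toy model of ASS13): over an
infinite field `F`, for any `z₁,…,zₙ ∈ F^k` there exist shifts `t₁,…,tₙ ∈ F`
(acting as constant vectors) such that
`D' = Π_{i=1}^n (1 + zᵢ·(xᵢ + tᵢ))` is `(⌊log₂ k⌋ + 2)`-concentrated. -/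
theorem shift_concentration (F : Type*) [Field F] [Infinite F] (k n : ℕ)
    (hk : 1 ≤ k) (hn : 1 ≤ n) (z : Fin n → (Fin k → F)) :
    ∃ t : Fin n → F,
      Concentrated F (Nat.log 2 k + 2)
        (∏ i : Fin n,
          (1 + MvPolynomial.C (z i) *
            (MvPolynomial.X i + MvPolynomial.C (algebraMap F (Fin k → F) (t i))))) := by
  have hℓ : k < 2 ^ (Nat.log 2 k + 2) := Nat.lt_pow_of_log_lt one_lt_two (by omega)
  exact shift_concentration_general (by rwa [Module.finrank_fin_fun]) Finset.univ z
end
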